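/- Let (p_n)_{n≥1} be a Schauder decomposition of a complex Banach space X. Then (p_n) is R-Schauder if and only if for every nonincreasing sequence (b_n)_{n≥1} of positive real numbers, the multiplier operator B = M_b has the property that the set {exp(−tB) : t ≥ 0} is R-bounded. -/

import Mathlib

open Filter Topology NormedSpace

/-- Average over all sign vectors `(ε_1,…,ε_k) ∈ {−1,1}^k` of `‖∑_j ε_j v_j‖`. -/
noncomputable def signAvg {X : Type*} [NormedAddCommGroup X] [NormedSpace ℂ X]
    (k : ℕ) (v : Fin k → X) : ℝ :=
  (2 ^ k : ℝ)⁻¹ * ∑ ε : Fin k → Bool, ‖∑ j : Fin k, (if ε j then (1 : ℝ) else -1) • v j‖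

/-- A set of bounded operators on `X` is `R`-bounded. -/
def IsRBounded {X : Type*} [NormedAddCommGroup X] [NormedSpace ℂ X]
    (F : Set (X →L[ℂ] X)) : Prop :=
  ∃ C : ℝ, 0 ≤ C ∧ ∀ (k : ℕ) (T : Fin k → X →L[ℂ] X) (x : Fin k → X),
    (∀ j, T j ∈ F) → signAvg k (fun j => (T j) (x j)) ≤ C * signAvg k x

/-- `(p n)` is a Schauder decomposition of `X`: the `p n` are pairwise "orthogonal"
bounded projections whose partial sums converge pointwise to the identity.
(Indexing starts at `0`, corresponding to `n = 1` in the classical notation.) -/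
def IsSchauderDecomposition {X : Type*} [NormedAddCommGroup X] [NormedSpace ℂ X]
    (p : ℕ → X →L[ℂ] X) : Prop :=
  (∀ n, (p n).comp (p n) = p n) ∧
  (∀ m n, m ≠ n → (p m).comp (p n) = 0) ∧
  (∀ x : X, Tendsto (fun N => ∑ n ∈ Finset.range N, p n x) atTop (nhds x))

/-- The partial sum projection `P_N = ∑_{n<N} p_n`. -/
noncomputable def partialSum {X : Type*} [NormedAddCommGroup X] [NormedSpace ℂ X]
    (p : ℕ → X →L[ℂ] X) (N : ℕ) : X →L[ℂ] X :=
  ∑ n ∈ Finset.range N, p n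

/-!
Write `P_N` for the partial sums. Abel summation exhibits `∑_{n<L} β_n p_n`, for `β` nonincreasing
with values in `[0, 1]`, as a convex combination of `P_0, …, P_L`. As `R`-boundedness passes to
convex hulls and strong limits, all multipliers `M_β` together form an `R`-bounded set if `(p_n)` is
`R`-Schauder, and `exp (-tM_b) = 1 - M_β` with `β_n = 1 - e^{-t b_n}`.

Conversely, let `b` decrease superexponentially and let `t_N` be the geometric mean of `1 / b_{N-1}`
and `1 / b_N`. Then `e^{-t_N b_n}` is so close to `0` for `n < N` and to `1` for `n ≥ N` that
`1 - exp (-t_N M_b) - P_N` is summable in norm over `N`, and a norm-summable family is `R`-bounded.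
-/

section SignAverage

variable {X Y : Type*} [NormedAddCommGroup X] [NormedSpace ℂ X]
  [NormedAddCommGroup Y] [NormedSpace ℂ Y] {k : ℕ}

variable (X k) in
/-- The average `signAvg` over all signs, as a seminorm on `k`-tuples of vectors. -/
noncomputable def signSeminorm : Seminorm ℝ (Fin k → X) :=
  Seminorm.of (signAvg k)
    (fun v w => by
      simp only [signAvg, ← mul_add, ← Finset.sum_add_distrib]
      gcongr with ε
      simpa only [Pi.add_apply, smul_add, Finset.sum_add_distrib] using norm_add_le _ _)
    (fun a v => by
      simp only [signAvg, Pi.smul_apply, smul_comm _ a, ← Finset.smul_sum, norm_smul,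
        ← Finset.mul_sum]
      ring)

theorem signAvg_nonneg (v : Fin k → X) : 0 ≤ signAvg k v :=
  apply_nonneg (signSeminorm X k) v

theorem signAvg_sub_le (v w : Fin k → X) :
    signAvg k (fun j => v j - w j) ≤ signAvg k v + signAvg k w :=
  map_sub_le_add (signSeminorm X k) v w

theorem signAvg_sum_le {ι : Type*} (s : Finset ι) (v : ι → Fin k → X) :
    signAvg k (∑ i ∈ s, v i) ≤ ∑ i ∈ s, signAvg k (v i) :=
  Finset.le_sum_of_subadditive (signSeminorm X k) (map_zero _).le (map_add_le_add _) s v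

theorem convexOn_signAvg : ConvexOn ℝ Set.univ (signAvg k : (Fin k → X) → ℝ) :=
  (signSeminorm X k).convexOn

theorem continuous_signAvg : Continuous (signAvg k : (Fin k → X) → ℝ) := by
  unfold signAvg
  fun_prop

theorem signAvg_map_le (T : X →L[ℂ] Y) (v : Fin k → X) :
    signAvg k (fun j => T (v j)) ≤ ‖T‖ * signAvg k v := by
  have h_map (ε : Fin k → Bool) :
      ∑ j, (if ε j then (1 : ℝ) else -1) • T (v j)
        = T (∑ j, (if ε j then (1 : ℝ) else -1) • v j) := by
    simp only [map_sum, T.map_smul_of_tower]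
  simp only [signAvg, h_map]
  rw [mul_left_comm, Finset.mul_sum _ _ ‖T‖]
  gcongr with ε
  exact T.le_opNorm _

theorem signAvg_sign_smul (s : Fin k → Bool) (v : Fin k → X) :
    signAvg k (fun j => (if s j then (1 : ℝ) else -1) • v j) = signAvg k v := by
  unfold signAvg
  congr 1
  refine Fintype.sum_equiv
    (Equiv.piCongrRight fun j => if s j then Equiv.refl Bool else Equiv.boolNot) _ _ fun ε => ?_
  congr! 2 with j
  cases hs : s j <;> cases hε : ε j <;> simp [hs, hε]

theorem signAvg_ite_zero_le (s : Fin k → Prop) [DecidablePred s] (v : Fin k → X) :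
    signAvg k (fun j => if s j then v j else 0) ≤ signAvg k v := by
  -- The truncation is the midpoint of `v` and of the tuple with signs flipped outside `s`.
  have h_mid : (fun j => if s j then v j else 0)
      = (1 / 2 : ℝ) • v + (1 / 2 : ℝ) • fun j => (if decide (s j) then (1 : ℝ) else -1) • v j := by
    funext j
    by_cases hj : s j
    · simp only [hj, if_true, decide_true, Pi.add_apply, Pi.smul_apply]
      module
    · simp [hj]
  have h_max := convexOn_signAvg.le_max_of_mem_segment (Set.mem_univ v)
    (Set.mem_univ fun j => (if decide (s j) then (1 : ℝ) else -1) • v j)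
    ⟨1 / 2, 1 / 2, by norm_num, by norm_num, by norm_num, h_mid.symm⟩
  rwa [signAvg_sign_smul (fun j => decide (s j)), max_self] at h_max

end SignAverage

section RBounded

open scoped Pointwise

variable {X : Type*} [NormedAddCommGroup X] [NormedSpace ℂ X] {F G : Set (X →L[ℂ] X)}

theorem IsRBounded.mono (hG : IsRBounded G) (hFG : F ⊆ G) : IsRBounded F := by
  obtain ⟨C, hC, h⟩ := hG
  exact ⟨C, hC, fun k T x hT => h k T x fun j => hFG (hT j)⟩

theorem IsRBounded.sub (hF : IsRBounded F) (hG : IsRBounded G) : IsRBounded (F - G) := by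
  obtain ⟨C, hC, hF⟩ := hF
  obtain ⟨D, hD, hG⟩ := hG
  refine ⟨C + D, by positivity, fun k T x hT => ?_⟩
  choose A hA B hB hAB using hT
  calc signAvg k (fun j => T j (x j))
      = signAvg k (fun j => A j (x j) - B j (x j)) := by simp only [← hAB, sub_apply]
    _ ≤ signAvg k (fun j => A j (x j)) + signAvg k (fun j => B j (x j)) := signAvg_sub_le _ _
    _ ≤ C * signAvg k x + D * signAvg k x := add_le_add (hF k A x hA) (hG k B x hB)
    _ = (C + D) * signAvg k x := (add_mul _ _ _).symm

theorem IsRBounded.insert_zero (hF : IsRBounded F) : IsRBounded (insert 0 F) := by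
  classical
  obtain ⟨C, hC, h⟩ := hF
  refine ⟨C, hC, fun k T x hT => ?_⟩
  obtain rfl | ⟨S, hS⟩ := F.eq_empty_or_nonempty
  · have hT_zero (j : Fin k) : T j = 0 := by simpa using hT j
    calc signAvg k (fun j => T j (x j)) = signSeminorm X k 0 := by simp only [hT_zero]; rfl
      _ = 0 := map_zero _
      _ ≤ C * signAvg k x := mul_nonneg hC (signAvg_nonneg x)
  · have h_replace (j : Fin k) :
        T j (x j) = (if T j ∈ F then T j else S) (if T j ∈ F then x j else 0) := by
      obtain hj | hj := hT j <;> split_ifs <;> simp_all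
    calc signAvg k (fun j => T j (x j))
        = signAvg k (fun j => (if T j ∈ F then T j else S) (if T j ∈ F then x j else 0)) := by
          simp only [← h_replace]
      _ ≤ C * signAvg k (fun j => if T j ∈ F then x j else 0) :=
          h k _ _ fun j => by split_ifs <;> assumption
      _ ≤ C * signAvg k x := by gcongr; exact signAvg_ite_zero_le _ x

protected theorem IsRBounded.convexHull (hF : IsRBounded F) : IsRBounded (convexHull ℝ F) := by
  obtain ⟨C, hC, h⟩ := hF
  refine ⟨C, hC, fun k T x hT => ?_⟩
  let evalAt : (Fin k → X →L[ℂ] X) →ₗ[ℝ] (Fin k → X) :=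
    { toFun := fun S j => S j (x j)
      map_add' := fun _ _ => rfl
      map_smul' := fun _ _ => rfl }
  have hT_mem : T ∈ convexHull ℝ (Set.univ.pi fun _ => F) := by
    rw [convexHull_pi]
    exact fun j _ => hT j
  obtain ⟨S, hS, hTS⟩ :=
    (convexOn_signAvg.comp_linearMap evalAt).exists_ge_of_mem_convexHull (Set.subset_univ _) hT_mem
  exact hTS.trans (h k S x fun j => hS j trivial)

theorem IsRBounded.of_forall_exists_tendsto (hF : IsRBounded F)
    (hG : ∀ T ∈ G, ∃ S : ℕ → X →L[ℂ] X,
      (∀ n, S n ∈ F) ∧ ∀ x, Tendsto (fun n => S n x) atTop (𝓝 (T x))) :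
    IsRBounded G := by
  obtain ⟨C, hC, h⟩ := hF
  refine ⟨C, hC, fun k T x hT => ?_⟩
  choose S hSF hST using fun j => hG (T j) (hT j)
  have h_lim : Tendsto (fun n => signAvg k fun j => S j n (x j)) atTop
      (𝓝 (signAvg k fun j => T j (x j))) :=
    (continuous_signAvg.tendsto _).comp (tendsto_pi_nhds.2 fun j => hST j (x j))
  exact le_of_tendsto' h_lim fun n => h k (fun j => S j n) x fun j => hSF j n

theorem isRBounded_range_of_summable_norm {ι : Type*} {D : ι → X →L[ℂ] X}
    (hD : Summable fun i => ‖D i‖) : IsRBounded (Set.range D) := by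
  classical
  refine ⟨∑' i, ‖D i‖, tsum_nonneg fun i => norm_nonneg _, fun k T x hT => ?_⟩
  choose i hi using hT
  have h_group : (fun j => T j (x j))
      = ∑ m ∈ Finset.univ.image i, fun j => D m (if i j = m then x j else 0) := by
    funext j
    simp [Finset.sum_apply, apply_ite, ← hi j]
  calc signAvg k (fun j => T j (x j))
      ≤ ∑ m ∈ Finset.univ.image i, signAvg k (fun j => D m (if i j = m then x j else 0)) :=
        h_group ▸ signAvg_sum_le _ _
    _ ≤ ∑ m ∈ Finset.univ.image i, ‖D m‖ * signAvg k x := by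
        gcongr with m
        exact (signAvg_map_le (D m) _).trans (by gcongr; exact signAvg_ite_zero_le _ x)
    _ = (∑ m ∈ Finset.univ.image i, ‖D m‖) * signAvg k x := (Finset.sum_mul ..).symm
    _ ≤ (∑' m, ‖D m‖) * signAvg k x := by
        gcongr
        · exact signAvg_nonneg x
        · exact hD.sum_le_tsum _ fun m _ => norm_nonneg _

theorem isRBounded_singleton (T : X →L[ℂ] X) : IsRBounded {T} := by
  simpa using isRBounded_range_of_summable_norm (D := fun _ : Unit => T) (.of_finite)

end RBounded

open scoped Pointwise in
theorem sum_range_smul_mem_of_antitone {𝕜 E : Type*} [Field 𝕜] [LinearOrder 𝕜]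
    [IsStrictOrderedRing 𝕜] [AddCommGroup E] [Module 𝕜 E] {s : Set E} (hs : Convex 𝕜 s)
    {f : ℕ → E} (hf : ∀ N, ∑ n ∈ Finset.range N, f n ∈ s) {β : ℕ → 𝕜}
    (hβ : Antitone β) (hβ_nonneg : ∀ n, 0 ≤ β n) (hβ_le : β 0 ≤ 1) (L : ℕ) :
    ∑ n ∈ Finset.range L, β n • f n ∈ s := by
  have h_abel : ∑ n ∈ Finset.range L, (β n - β L) • f n ∈ (β 0 - β L) • s := by
    induction L with
    | zero => exact ⟨0, by simpa using hf 0, by simp⟩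
    | succ L ih =>
      have h_split : ∑ n ∈ Finset.range (L + 1), (β n - β (L + 1)) • f n
          = ∑ n ∈ Finset.range L, (β n - β L) • f n
            + (β L - β (L + 1)) • ∑ n ∈ Finset.range (L + 1), f n := by
        simp only [Finset.sum_range_succ, sub_smul, Finset.sum_sub_distrib, ← Finset.smul_sum,
          smul_add]
        abel
      rw [h_split, ← sub_add_sub_cancel (β 0) (β L),
        hs.add_smul (sub_nonneg.2 (hβ L.zero_le)) (sub_nonneg.2 (hβ L.le_succ))]
      exact Set.add_mem_add ih (Set.smul_mem_smul_set (hf (L + 1)))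
  have h_decomp : ∑ n ∈ Finset.range L, β n • f n
      = ∑ n ∈ Finset.range L, (β n - β L) • f n + β L • ∑ n ∈ Finset.range L, f n := by
    simp only [sub_smul, Finset.sum_sub_distrib, ← Finset.smul_sum, sub_add_cancel]
  have h_mem : ∑ n ∈ Finset.range L, β n • f n ∈ β 0 • s := by
    rw [h_decomp, ← sub_add_cancel (β 0) (β L),
      hs.add_smul (sub_nonneg.2 (hβ L.zero_le)) (hβ_nonneg L)]
    exact Set.add_mem_add h_abel (Set.smul_mem_smul_set (hf L))
  obtain ⟨y, hy, h_eq⟩ := h_mem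
  exact h_eq ▸ hs.smul_mem_of_zero_mem (by simpa using hf 0) hy ⟨hβ_nonneg 0, hβ_le⟩

/-- The operator `T` is the multiplier `M_c` of the sequence `p` of operators: `T x = ∑ c_n p_n x`
for all `x`, where the series need only converge conditionally. -/
def IsMultiplier {X : Type*} [NormedAddCommGroup X] [NormedSpace ℂ X]
    (p : ℕ → X →L[ℂ] X) (c : ℕ → ℂ) (T : X →L[ℂ] X) : Prop :=
  ∀ x, Tendsto (fun N => ∑ n ∈ Finset.range N, c n • p n x) atTop (𝓝 (T x))

section Multiplier

variable {X : Type*} [NormedAddCommGroup X] [NormedSpace ℂ X] {p : ℕ → X →L[ℂ] X}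
  {c d : ℕ → ℂ} {S T : X →L[ℂ] X} {M : ℝ}

theorem IsMultiplier.sub (hS : IsMultiplier p c S) (hT : IsMultiplier p d T) :
    IsMultiplier p (fun n => c n - d n) (S - T) := fun x => by
  simpa only [sub_smul, Finset.sum_sub_distrib, sub_apply] using (hS x).sub (hT x)

theorem IsMultiplier.norm_le (hT : IsMultiplier p c T) (hp : ∀ n, ‖p n‖ ≤ M) {g : ℕ → ℝ} {r : ℝ}
    (hcg : ∀ n, ‖c n‖ ≤ g n) (hg : HasSum g r) : ‖T‖ ≤ r * M := by
  have hg_nonneg (n : ℕ) : 0 ≤ g n := (norm_nonneg _).trans (hcg n)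
  have hM : 0 ≤ M := (norm_nonneg _).trans (hp 0)
  refine T.opNorm_le_bound (mul_nonneg (hg.nonneg hg_nonneg) hM) fun x => ?_
  refine le_of_tendsto' (hT x).norm fun N => ?_
  calc ‖∑ n ∈ Finset.range N, c n • p n x‖
      ≤ ∑ n ∈ Finset.range N, g n * (M * ‖x‖) := norm_sum_le_of_le _ fun n _ => by
        rw [norm_smul]
        exact mul_le_mul (hcg n) ((p n).le_of_opNorm_le (hp n) x) (norm_nonneg _) (hg_nonneg n)
    _ = (∑ n ∈ Finset.range N, g n) * M * ‖x‖ := by rw [← Finset.sum_mul, mul_assoc]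
    _ ≤ r * M * ‖x‖ := by
        gcongr
        exact sum_le_hasSum _ (fun n _ => hg_nonneg n) hg

theorem exists_isMultiplier_of_summable_norm [CompleteSpace X] (hp : ∀ n, ‖p n‖ ≤ M)
    (hc : Summable fun n => ‖c n‖) : ∃ T, IsMultiplier p c T := by
  have h_summable : Summable fun n => c n • p n :=
    .of_norm_bounded (hc.mul_right M) fun n => by
      rw [norm_smul]
      gcongr
      exact hp n
  refine ⟨∑' n, c n • p n, fun x => ?_⟩
  simpa [Function.comp_def] using
    ((ContinuousLinearMap.apply ℂ X x).continuous.tendsto _).comp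
      h_summable.hasSum.tendsto_sum_nat

namespace IsSchauderDecomposition

theorem exists_norm_le [CompleteSpace X] (hp : IsSchauderDecomposition p) :
    ∃ M, ∀ n, ‖p n‖ ≤ M := by
  refine banach_steinhaus fun x => ?_
  have h_diff := ((tendsto_add_atTop_iff_nat 1).2 (hp.2.2 x)).sub (hp.2.2 x)
  obtain ⟨C, hC⟩ := h_diff.norm.bddAbove_range
  exact ⟨C, fun n => by simpa [Finset.sum_range_succ] using hC ⟨n, rfl⟩⟩

theorem mul_eq_ite (hp : IsSchauderDecomposition p) (m n : ℕ) :
    p m * p n = if n = m then p m else 0 := by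
  split_ifs with h
  · exact h ▸ hp.1 n
  · exact hp.2.1 m n (Ne.symm h)

theorem isMultiplier_iff (hp : IsSchauderDecomposition p) :
    IsMultiplier p c T ↔ ∀ m, p m * T = c m • p m := by
  refine ⟨fun hT m => ?_, fun h x => ?_⟩
  · ext x
    have h_lim := ((p m).continuous.tendsto _).comp (hT x)
    refine tendsto_nhds_unique h_lim (tendsto_const_nhds.congr' ?_)
    filter_upwards [eventually_gt_atTop m] with N hN
    have h_proj (n : ℕ) : p m (p n x) = if n = m then p m x else 0 := by
      simpa [apply_ite (fun A : X →L[ℂ] X => A x)] using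
        congrArg (fun A : X →L[ℂ] X => A x) (hp.mul_eq_ite m n)
    simp [h_proj, hN]
  · refine (hp.2.2 (T x)).congr fun N => Finset.sum_congr rfl fun n _ => ?_
    exact congrArg (fun A : X →L[ℂ] X => A x) (h n)

theorem isMultiplier_one (hp : IsSchauderDecomposition p) : IsMultiplier p (fun _ => 1) 1 :=
  hp.isMultiplier_iff.2 fun m => by rw [mul_one, one_smul]

theorem isMultiplier_partialSum (hp : IsSchauderDecomposition p) (N : ℕ) :
    IsMultiplier p (fun n => if n < N then 1 else 0) (partialSum p N) :=
  hp.isMultiplier_iff.2 fun m => by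
    simp [partialSum, Finset.mul_sum, hp.mul_eq_ite]

end IsSchauderDecomposition

end Multiplier

theorem mul_exp_eq_smul_of_mul_eq_smul {𝕜 A : Type*} [RCLike 𝕜] [NormedRing A]
    [NormedAlgebra 𝕜 A] [CompleteSpace A] {a q : A} {z : 𝕜} (h : q * a = z • q) :
    q * exp a = exp z • q := by
  let : NormedAlgebra ℚ A := .restrictScalars ℚ 𝕜 A
  have h_semiconj : SemiconjBy q a (algebraMap 𝕜 A z) := h.trans (Algebra.smul_def z q)
  simpa only [← algebraMap_exp_comm, ← Algebra.smul_def] using h_semiconj.exp_right.eq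

/-- The witnesses are `b_n = 2^{-2n(n+1)}` and the geometric mean `t_N = 2^{2N^2}` of `1 / b_{N-1}`
and `1 / b_N`. -/
theorem exists_antitone_exp_approx_indicator :
    ∃ b t : ℕ → ℝ, Antitone b ∧ (∀ n, 0 < b n) ∧ Summable b ∧ (∀ N, 0 ≤ t N) ∧
      ∀ N n, |1 - Real.exp (-(t N * b n)) - if n < N then 1 else 0|
        ≤ (1 / 2) ^ N * (1 / 2) ^ n := by
  have h_half (n : ℕ) : (1 / 2 : ℝ) ^ n = 2 ^ (-n : ℤ) := by simp
  refine ⟨fun n => 2 ^ (-(2 * n * (n + 1)) : ℤ), fun N => 2 ^ (2 * N ^ 2 : ℤ),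
    fun m n hmn => ?_, fun n => by positivity, ?_, fun N => by positivity, fun N n => ?_⟩
  · dsimp only
    gcongr
    exact one_le_two
  · refine .of_nonneg_of_le (fun n => by positivity) (fun n => ?_) summable_geometric_two
    rw [h_half]
    exact zpow_le_zpow_right₀ one_le_two (by nlinarith)
  · rw [← zpow_add₀ two_ne_zero, h_half, h_half, ← zpow_add₀ two_ne_zero]
    set s : ℝ := 2 ^ (2 * (N : ℤ) ^ 2 + -(2 * n * (n + 1))) with hs
    have hs_pos : 0 < s := by positivity
    have h_exp_le : Real.exp (-s) ≤ 1 := Real.exp_le_one_iff.2 (neg_nonpos.2 hs_pos.le)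
    split_ifs with hnN
    · have hnN' : (n : ℤ) + 1 ≤ N := by exact_mod_cast hnN
      calc |1 - Real.exp (-s) - 1| = (Real.exp s)⁻¹ := by
            rw [sub_sub_cancel_left, abs_neg, Real.abs_exp, Real.exp_neg]
        _ ≤ s⁻¹ := inv_anti₀ hs_pos (by linarith [Real.add_one_le_exp s])
        _ ≤ 2 ^ (-N + -n : ℤ) := by
            rw [hs, ← zpow_neg]
            exact zpow_le_zpow_right₀ one_le_two (by nlinarith [hnN'])
    · have hNn : (N : ℤ) ≤ n := by exact_mod_cast not_lt.1 hnN
      calc |1 - Real.exp (-s) - 0| = 1 - Real.exp (-s) := by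
            rw [sub_zero, abs_of_nonneg (sub_nonneg.2 h_exp_le)]
        _ ≤ s := by linarith [Real.add_one_le_exp (-s)]
        _ ≤ 2 ^ (-N + -n : ℤ) := zpow_le_zpow_right₀ one_le_two (by nlinarith [hNn])

section RSchauder

variable {X : Type*} [NormedAddCommGroup X] [NormedSpace ℂ X] {p : ℕ → X →L[ℂ] X}

theorem IsRBounded.antitone_multipliers
    (hP : IsRBounded (Set.range fun N => partialSum p (N + 1))) :
    IsRBounded {T | ∃ β : ℕ → ℝ, Antitone β ∧ (∀ n, 0 ≤ β n) ∧ β 0 ≤ 1 ∧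
      IsMultiplier p (fun n => β n) T} := by
  refine hP.insert_zero.convexHull.of_forall_exists_tendsto ?_
  rintro T ⟨β, hβ, hβ_nonneg, hβ_le, hT⟩
  refine ⟨fun L => ∑ n ∈ Finset.range L, β n • p n, fun L => ?_, fun x => ?_⟩
  · refine sum_range_smul_mem_of_antitone (convex_convexHull ℝ _) (fun N => ?_)
      hβ hβ_nonneg hβ_le L
    refine subset_convexHull ℝ _ ?_
    cases N with
    | zero => exact .inl (Finset.sum_range_zero _)
    | succ N => exact .inr ⟨N, rfl⟩
  · simpa using hT x

variable [CompleteSpace X]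

theorem IsMultiplier.exp_neg_smul (hp : IsSchauderDecomposition p) {b : ℕ → ℝ} {B : X →L[ℂ] X}
    (hB : IsMultiplier p (fun n => b n) B) (t : ℝ) :
    IsMultiplier p (fun n => Real.exp (-(t * b n))) (exp (-((t : ℂ) • B))) := by
  refine hp.isMultiplier_iff.2 fun m => ?_
  have h_eigen : p m * -((t : ℂ) • B) = (-(t * b m) : ℂ) • p m := by
    rw [mul_neg, mul_smul_comm, hp.isMultiplier_iff.1 hB, smul_smul, neg_smul]
  rw [mul_exp_eq_smul_of_mul_eq_smul h_eigen, ← Complex.exp_eq_exp_ℂ]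
  push_cast
  rfl

open scoped Pointwise in
theorem IsRBounded.exp_neg_smul_multiplier (hp : IsSchauderDecomposition p)
    (hP : IsRBounded (Set.range fun N => partialSum p (N + 1))) {b : ℕ → ℝ} (hb : Antitone b)
    (hb_nonneg : ∀ n, 0 ≤ b n) {B : X →L[ℂ] X} (hB : IsMultiplier p (fun n => b n) B) :
    IsRBounded {S : X →L[ℂ] X | ∃ t : ℝ, 0 ≤ t ∧ S = exp (-((t : ℂ) • B))} := by
  refine ((isRBounded_singleton 1).sub hP.antitone_multipliers).mono ?_
  rintro _ ⟨t, ht, rfl⟩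
  refine ⟨1, rfl, 1 - exp (-((t : ℂ) • B)),
    ⟨fun n => 1 - Real.exp (-(t * b n)), fun m n hmn => ?_, fun n => ?_, ?_, ?_⟩,
    sub_sub_cancel _ _⟩
  · have := hb hmn
    dsimp only
    gcongr
  · have := mul_nonneg ht (hb_nonneg n)
    simpa
  · exact sub_le_self _ (Real.exp_nonneg _)
  · simpa using hp.isMultiplier_one.sub (hB.exp_neg_smul hp t)

open scoped Pointwise in
theorem IsSchauderDecomposition.isRBounded_range_partialSum (hp : IsSchauderDecomposition p)
    (h : ∀ b : ℕ → ℝ, Antitone b → (∀ n, 0 < b n) → ∀ B : X →L[ℂ] X,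
      IsMultiplier p (fun n => b n) B →
        IsRBounded {S : X →L[ℂ] X | ∃ t : ℝ, 0 ≤ t ∧ S = exp (-((t : ℂ) • B))}) :
    IsRBounded (Set.range (partialSum p)) := by
  obtain ⟨M, hM⟩ := hp.exists_norm_le
  obtain ⟨b, t, hb, hb_pos, hb_summable, ht, h_approx⟩ := exists_antitone_exp_approx_indicator
  obtain ⟨B, hB⟩ : ∃ B, IsMultiplier p (fun n => b n) B :=
    exists_isMultiplier_of_summable_norm hM (by simpa using hb_summable.abs)
  let D (N : ℕ) : X →L[ℂ] X := 1 - exp (-((t N : ℂ) • B)) - partialSum p N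
  have hD_multiplier (N : ℕ) : IsMultiplier p
      (fun n => ((1 - Real.exp (-(t N * b n)) - if n < N then 1 else 0 : ℝ) : ℂ)) (D N) := by
    simpa [D, apply_ite] using (hp.isMultiplier_one.sub (hB.exp_neg_smul hp (t N))).sub
      (hp.isMultiplier_partialSum N)
  have hD_norm (N : ℕ) : ‖D N‖ ≤ (1 / 2) ^ N * 2 * M :=
    (hD_multiplier N).norm_le hM (fun n => (Complex.norm_real _).trans_le (h_approx N n))
      (hasSum_geometric_two.mul_left _)
  have hD_summable : Summable fun N => ‖D N‖ :=
    .of_nonneg_of_le (fun N => norm_nonneg _) hD_norm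
      ((summable_geometric_two.mul_right 2).mul_right M)
  refine (((isRBounded_singleton 1).sub (h b hb hb_pos B hB)).sub
    (isRBounded_range_of_summable_norm hD_summable)).mono ?_
  rintro _ ⟨N, rfl⟩
  exact ⟨_, ⟨1, rfl, _, ⟨t N, ht N, rfl⟩, rfl⟩, D N, ⟨N, rfl⟩, sub_sub_cancel _ _⟩

end RSchauder

/-- A Schauder decomposition is `R`-Schauder iff for every nonincreasing positive
sequence `b`, the multiplier `B = M_b` has `{exp(−tB) : t ≥ 0}` `R`-bounded. -/
theorem statement13 {X : Type*} [NormedAddCommGroup X] [NormedSpace ℂ X] [CompleteSpace X]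
    (p : ℕ → X →L[ℂ] X) (hp : IsSchauderDecomposition p) :
    IsRBounded (Set.range fun N : ℕ => partialSum p (N + 1)) ↔
      ∀ b : ℕ → ℝ, Antitone b → (∀ n, 0 < b n) →
        ∀ B : X →L[ℂ] X,
          (∀ x : X, Tendsto (fun N => ∑ n ∈ Finset.range N, ((b n : ℝ) : ℂ) • p n x)
            atTop (nhds (B x))) →
          IsRBounded {S : X →L[ℂ] X | ∃ t : ℝ, 0 ≤ t ∧ S = exp (-((t : ℂ) • B))} := by
  refine ⟨fun hP b hb hb_pos B hB =>
    hP.exp_neg_smul_multiplier hp hb (fun n => (hb_pos n).le) hB, fun h => ?_⟩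
  exact (hp.isRBounded_range_partialSum h).mono (Set.range_comp_subset_range (· + 1) (partialSum p))
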